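/- Let S(l,3) be the signed double star consisting of a positive central edge z₁z₂, together with l positive pendant edges z₁v₁,…,z₁v_l and two negative pendant edges z₁u₁, z₁u₂ attached at z₁, and 3 positive pendant edges z₂w₁, z₂w₂, z₂w₃ attached at z₂, where l ≥ 2 and l is even. Then every additively graceful labeling g of S(l,3) satisfies g(z₁)=0, {g(u₁),g(u₂)}={1,2}, g(z₂)=l+4, exactly one of the w's receives the label l/2+2, the other two w's receive the labels l+5 and l+6, and the v's receive the remaining labels {3,4,…,l+3}\{l/2+2}; that is, the additively graceful labeling of S(l,3) is unique up to permutation of labels among the u's, among the v's, and among the w's. -/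

import Mathlib

/-!
Consider a double star with `a` positive and two negative pendant edges at `z₁` and `c` positive
pendant edges at `z₂`, and write `m = a + c + 1` for its number of positive edges. It has `m + 3`
vertices, so a graceful labeling `g` uses every label `0, …, m + 2`. The negative sums `1` and `2`
can only be `0 + 1` and `0 + 2`, which forces `g z₁ = 0` and `{g u₁, g u₂} = {1, 2}`. Every positive
edge at `z₁` is then labelled by its other end, so `z₂` and the `v`s have labels at most `m`: the
two top labels `m + 1` and `m + 2` belong to `w`s, and every number in `1, …, m` which is not a
label of `z₂` or of a `v` must be one of the differences `|g z₂ - g wⱼ|`.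

For three `w`s, with labels `x ≤ m`, `m + 1` and `m + 2`, these differences include `1`, `2` and
`x ≥ 3`, hence they are exactly these. The consecutive pair `m + 1 - g z₂`, `m + 2 - g z₂` is either
`1, 2`, giving `g z₂ = m` and `m - x = x`, or `2, 3`, giving `x = 3`, `|g z₂ - 3| = 1` and therefore
`g z₂ = 4` and `m = 5`.
-/


/-- A signed graph on vertex type `V`: a finite set of positive edges and a
finite set of negative edges, disjoint from one another, with no loops. -/
structure SignedGraph (V : Type) [DecidableEq V] where
  posEdges : Finset (Sym2 V)
  negEdges : Finset (Sym2 V)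
  disjoint : Disjoint posEdges negEdges
  pos_not_diag : ∀ e ∈ posEdges, ¬ e.IsDiag
  neg_not_diag : ∀ e ∈ negEdges, ¬ e.IsDiag

/-- Induced label on a positive edge: `|f u - f v|`. -/
def posLabel {V : Type} (f : V → ℕ) : Sym2 V → ℕ :=
  Sym2.lift ⟨fun u v => Nat.dist (f u) (f v), fun u v => Nat.dist_comm _ _⟩

/-- Induced label on a negative edge: `f u + f v`. -/
def negLabel {V : Type} (f : V → ℕ) : Sym2 V → ℕ :=
  Sym2.lift ⟨fun u v => f u + f v, fun u v => Nat.add_comm _ _⟩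

/-- `f` is an additively graceful labeling of the signed graph `S`:
it is an injection into `{0, 1, …, m + ⌈(n+1)/2⌉}` whose induced labels on the
positive edges are exactly `{1, …, m}` and on the negative edges exactly
`{1, …, n}`, where `m` (resp. `n`) is the number of positive (negative) edges.
(Note that `⌈(n+1)/2⌉ = (n+2)/2` with natural-number division.) -/
def IsAddGraceful {V : Type} [DecidableEq V] (S : SignedGraph V) (f : V → ℕ) : Prop :=
  Function.Injective f ∧
  (∀ v : V, f v ≤ S.posEdges.card + (S.negEdges.card + 2) / 2) ∧
  S.posEdges.image (posLabel f) = Finset.Icc 1 S.posEdges.card ∧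
  S.negEdges.image (negLabel f) = Finset.Icc 1 S.negEdges.card

/-- Vertex type of a double star: the two centers `z₁, z₂`, the `a` positive
pendant neighbours and `b` negative pendant neighbours of `z₁`, and the `c`
positive pendant neighbours of `z₂`. -/
abbrev DSV (a b c : ℕ) : Type := (Unit ⊕ Unit) ⊕ (Fin a ⊕ Fin b ⊕ Fin c)

/-- the first central vertex `z₁` -/
def z1 {a b c : ℕ} : DSV a b c := Sum.inl (Sum.inl ())
/-- the second central vertex `z₂` -/
def z2 {a b c : ℕ} : DSV a b c := Sum.inl (Sum.inr ())
/-- the end `vᵢ` of the `i`-th positive pendant edge at `z₁` -/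
def vv {a b c : ℕ} (i : Fin a) : DSV a b c := Sum.inr (Sum.inl i)
/-- the end `uᵢ` of the `i`-th negative pendant edge at `z₁` -/
def uu {a b c : ℕ} (i : Fin b) : DSV a b c := Sum.inr (Sum.inr (Sum.inl i))
/-- the end `wᵢ` of the `i`-th positive pendant edge at `z₂` -/
def ww {a b c : ℕ} (i : Fin c) : DSV a b c := Sum.inr (Sum.inr (Sum.inr i))

/-- The signed double star with a *positive* central edge `z₁z₂`,
`a` positive and `b` negative pendant edges at `z₁`, and `c` positive pendant
edges at `z₂`. -/
def doubleStarPos (a b c : ℕ) : SignedGraph (DSV a b c) where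
  posEdges :=
    {s(z1, z2)} ∪ Finset.univ.image (fun i : Fin a => s(z1, vv i)) ∪
      Finset.univ.image (fun i : Fin c => s(z2, ww i))
  negEdges := Finset.univ.image (fun i : Fin b => s(z1, uu i))
  disjoint := by
    rw [Finset.disjoint_left]
    intro e he1 he2
    simp only [Finset.mem_union, Finset.mem_singleton, Finset.mem_image,
      Finset.mem_univ, true_and] at he1 he2
    obtain ⟨j, rfl⟩ := he2
    rcases he1 with (h | ⟨i, h⟩) | ⟨i, h⟩ <;>
      simp [z1, z2, vv, uu, ww, Sym2.eq_iff] at h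
  pos_not_diag := by
    intro e he
    simp only [Finset.mem_union, Finset.mem_singleton, Finset.mem_image,
      Finset.mem_univ, true_and] at he
    rcases he with (rfl | ⟨i, rfl⟩) | ⟨i, rfl⟩ <;>
      simp [z1, z2, vv, ww, Sym2.mk_isDiag_iff]
  neg_not_diag := by
    intro e he
    simp only [Finset.mem_image, Finset.mem_univ, true_and] at he
    obtain ⟨i, rfl⟩ := he
    simp [z1, uu, Sym2.mk_isDiag_iff]

open Finset

theorem posLabel_mk {V : Type} (f : V → ℕ) (u v : V) :
    posLabel f s(u, v) = Nat.dist (f u) (f v) := rfl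

theorem negLabel_mk {V : Type} (f : V → ℕ) (u v : V) :
    negLabel f s(u, v) = f u + f v := rfl

theorem IsAddGraceful.image_univ_eq_Iic {V : Type} [DecidableEq V] [Fintype V]
    {S : SignedGraph V} {f : V → ℕ} (hf : IsAddGraceful S f)
    (hcard : Fintype.card V = #S.posEdges + (#S.negEdges + 2) / 2 + 1) :
    univ.image f = Iic (#S.posEdges + (#S.negEdges + 2) / 2) := by
  refine eq_of_subset_of_card_le (image_subset_iff.2 fun v _ ↦ mem_Iic.2 (hf.2.1 v)) ?_
  rw [card_image_of_injective _ hf.1, Nat.card_Iic, card_univ, hcard]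

section DoubleStar

variable {a b c : ℕ}

theorem card_dsv : Fintype.card (DSV a b c) = a + b + c + 2 := by
  simp only [DSV, Fintype.card_sum, Fintype.card_unit, Fintype.card_fin]
  omega

theorem exists_dsv {p : DSV a b c → Prop} :
    (∃ v, p v) ↔
      p z1 ∨ p z2 ∨ (∃ i, p (vv i)) ∨ (∃ i, p (uu i)) ∨ ∃ i, p (ww i) := by
  simp only [Sum.exists, Unique.exists_iff, or_assoc]
  rfl

theorem ww_injective : Function.Injective (ww : Fin c → DSV a b c) := fun i j h ↦ by
  simpa [ww] using h

theorem card_posEdges_doubleStarPos : #(doubleStarPos a b c).posEdges = a + c + 1 := by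
  have hv : Function.Injective fun i : Fin a ↦ s((z1 : DSV a b c), vv i) := fun i j h ↦ by
    simpa [z1, vv] using h
  have hw : Function.Injective fun i : Fin c ↦ s((z2 : DSV a b c), ww i) := fun i j h ↦ by
    simpa [z2, ww] using h
  rw [doubleStarPos, card_union_of_disjoint, card_union_of_disjoint, card_singleton,
    card_image_of_injective _ hv, card_image_of_injective _ hw, card_fin, card_fin]
  · omega
  · simp [z1, z2, vv]
  · simp [disjoint_left, z1, z2, vv, ww]

theorem card_negEdges_doubleStarPos : #(doubleStarPos a b c).negEdges = b := by
  have hu : Function.Injective fun i : Fin b ↦ s((z1 : DSV a b c), uu i) := fun i j h ↦ by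
    simpa [z1, uu] using h
  rw [doubleStarPos, card_image_of_injective _ hu, card_fin]

theorem mem_image_posLabel_doubleStarPos {f : DSV a b c → ℕ} {k : ℕ} :
    k ∈ (doubleStarPos a b c).posEdges.image (posLabel f) ↔
      Nat.dist (f z1) (f z2) = k ∨ (∃ i, Nat.dist (f z1) (f (vv i)) = k) ∨
        ∃ i, Nat.dist (f z2) (f (ww i)) = k := by
  simp [doubleStarPos, image_union, image_image, posLabel_mk, eq_comm (a := k)]

theorem image_negLabel_doubleStarPos (f : DSV a b c → ℕ) :
    (doubleStarPos a b c).negEdges.image (negLabel f) =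
      univ.image fun i ↦ f z1 + f (uu i) := by
  simp only [doubleStarPos, image_image, Function.comp_def, negLabel_mk]

end DoubleStar

namespace IsAddGraceful

variable {a c : ℕ} {g : DSV a 2 c → ℕ} (hg : IsAddGraceful (doubleStarPos a 2 c) g)

include hg

theorem image_univ_doubleStarPos : univ.image g = Iic (a + c + 3) := by
  have h := hg.image_univ_eq_Iic (by
    rw [card_dsv, card_posEdges_doubleStarPos, card_negEdges_doubleStarPos]; omega)
  rwa [card_posEdges_doubleStarPos, card_negEdges_doubleStarPos] at h

theorem exists_posLabel_eq_iff {k : ℕ} :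
    (Nat.dist (g z1) (g z2) = k ∨ (∃ i, Nat.dist (g z1) (g (vv i)) = k) ∨
      ∃ i, Nat.dist (g z2) (g (ww i)) = k) ↔ 1 ≤ k ∧ k ≤ a + c + 1 := by
  rw [← mem_image_posLabel_doubleStarPos, hg.2.2.1, card_posEdges_doubleStarPos, mem_Icc]

theorem exists_negLabel_eq_iff {k : ℕ} : (∃ i, g z1 + g (uu i) = k) ↔ 1 ≤ k ∧ k ≤ 2 := by
  have h := hg.2.2.2
  rw [image_negLabel_doubleStarPos, card_negEdges_doubleStarPos] at h
  rw [← mem_Icc, ← h]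
  simp

theorem label_z1 : g z1 = 0 := by
  obtain ⟨i, hi⟩ := (hg.exists_negLabel_eq_iff (k := 1)).2 (by omega)
  obtain ⟨j, hj⟩ := (hg.exists_negLabel_eq_iff (k := 2)).2 (by omega)
  have hne : g z1 ≠ g (uu j) := hg.1.ne (by simp [z1, uu])
  omega

theorem exists_label_uu_eq_iff {k : ℕ} : (∃ i, g (uu i) = k) ↔ 1 ≤ k ∧ k ≤ 2 := by
  simpa [hg.label_z1] using hg.exists_negLabel_eq_iff (k := k)

theorem pair_label_uu : ({g (uu 0), g (uu 1)} : Finset ℕ) = {1, 2} := by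
  ext k
  have h := hg.exists_label_uu_eq_iff (k := k)
  rw [Fin.exists_fin_two] at h
  simp only [mem_insert, mem_singleton]
  omega

theorem three_le_label {v : DSV a 2 c} (hz : v ≠ z1) (hu : ∀ i, v ≠ uu i) : 3 ≤ g v := by
  by_contra! hlt
  have hpos : g v ≠ 0 := hg.label_z1 ▸ hg.1.ne hz
  obtain ⟨i, hi⟩ := (hg.exists_label_uu_eq_iff (k := g v)).2 (by omega)
  exact hu i (hg.1 hi.symm)

theorem label_z2_mem_Icc : g z2 ∈ Icc 3 (a + c + 1) := by
  have h := hg.exists_posLabel_eq_iff.1 (.inl rfl)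
  rw [hg.label_z1, Nat.dist_comm, Nat.dist_zero_right] at h
  exact mem_Icc.2 ⟨hg.three_le_label (by simp [z1, z2]) (by simp [z2, uu]), h.2⟩

theorem label_vv_mem_Icc (i : Fin a) : g (vv i) ∈ Icc 3 (a + c + 1) := by
  have h := hg.exists_posLabel_eq_iff.1 (.inr (.inl ⟨i, rfl⟩))
  rw [hg.label_z1, Nat.dist_comm, Nat.dist_zero_right] at h
  exact mem_Icc.2 ⟨hg.three_le_label (by simp [z1, vv]) (by simp [vv, uu]), h.2⟩

theorem label_ww_mem_Icc (j : Fin c) : g (ww j) ∈ Icc 3 (a + c + 3) := by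
  have h : g (ww j) ∈ Iic (a + c + 3) :=
    hg.image_univ_doubleStarPos ▸ mem_image_of_mem g (mem_univ _)
  exact mem_Icc.2 ⟨hg.three_le_label (by simp [z1, ww]) (by simp [ww, uu]), mem_Iic.1 h⟩

theorem exists_label_eq {k : ℕ} (hk : k ∈ Icc 3 (a + c + 3)) :
    g z2 = k ∨ (∃ i, g (vv i) = k) ∨ ∃ j, g (ww j) = k := by
  rw [mem_Icc] at hk
  have hmem : k ∈ univ.image g := hg.image_univ_doubleStarPos ▸ mem_Iic.2 hk.2
  obtain ⟨v, -, hv⟩ := mem_image.1 hmem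
  have hz1 := hg.label_z1
  have huu := hg.exists_label_uu_eq_iff (k := k)
  rcases exists_dsv (p := (g · = k)).1 ⟨v, hv⟩ with h | h | h | h | h
  · omega
  · exact .inl h
  · exact .inr (.inl h)
  · have := huu.1 h
    omega
  · exact .inr (.inr h)

theorem image_label_vv :
    (univ.image fun i ↦ g (vv i)) =
      Icc 3 (a + c + 3) \ insert (g z2) (univ.image fun j ↦ g (ww j)) := by
  ext k
  simp only [mem_image, mem_univ, true_and, mem_sdiff, mem_insert, not_or, not_exists]
  constructor
  · rintro ⟨i, rfl⟩
    refine ⟨Icc_subset_Icc_right (by omega) (hg.label_vv_mem_Icc i), ?_, fun j ↦ ?_⟩ <;>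
      exact hg.1.ne (by simp [vv, z2, ww])
  · rintro ⟨hk, hz2, hww⟩
    rcases hg.exists_label_eq hk with h | h | ⟨j, h⟩
    · exact absurd h.symm hz2
    · exact h
    · exact absurd h (hww j)

theorem pair_subset_image_label_ww :
    {a + c + 2, a + c + 3} ⊆ univ.image fun j ↦ g (ww j) := by
  intro k hk
  have hlarge : a + c + 1 < k ∧ k ≤ a + c + 3 := by
    rw [mem_insert, mem_singleton] at hk
    omega
  have hz2 := mem_Icc.1 hg.label_z2_mem_Icc
  rcases hg.exists_label_eq (mem_Icc.2 (by omega : 3 ≤ k ∧ k ≤ _)) with h | ⟨i, h⟩ | ⟨j, h⟩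
  · omega
  · have := mem_Icc.1 (hg.label_vv_mem_Icc i)
    omega
  · exact mem_image.2 ⟨j, mem_univ j, h⟩

theorem exists_label_ww_dist_eq {k : ℕ} (hk : k ∈ Icc 1 (a + c + 1)) (hz2 : k ≠ g z2)
    (hvv : ∀ i, k ≠ g (vv i)) : ∃ j, Nat.dist (g z2) (g (ww j)) = k := by
  have h := hg.exists_posLabel_eq_iff.2 (mem_Icc.1 hk)
  simp only [hg.label_z1, Nat.dist_comm 0, Nat.dist_zero_right] at h
  rcases h with h | ⟨i, h⟩ | h
  · exact absurd h.symm hz2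
  · exact absurd h.symm (hvv i)
  · exact h

theorem exists_mem_image_label_ww_dist_eq {k : ℕ} (hkm : k ≤ a + c + 1)
    (hk : k ∈ insert 1 (insert 2 (univ.image fun j ↦ g (ww j)))) :
    ∃ w ∈ univ.image fun j ↦ g (ww j), Nat.dist (g z2) w = k := by
  simp only [mem_insert, mem_image, mem_univ, true_and] at hk
  simp only [exists_mem_image, mem_univ, true_and]
  have hz2 := mem_Icc.1 hg.label_z2_mem_Icc
  have hvv : ∀ k ≤ 2, ∀ i, k ≠ g (vv i) := fun k hk i ↦ by
    have := mem_Icc.1 (hg.label_vv_mem_Icc i)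
    omega
  rcases hk with rfl | rfl | ⟨j, rfl⟩
  · exact hg.exists_label_ww_dist_eq (mem_Icc.2 (by omega)) (by omega) (hvv 1 one_le_two)
  · exact hg.exists_label_ww_dist_eq (mem_Icc.2 (by omega)) (by omega) (hvv 2 le_rfl)
  · have hj := mem_Icc.1 (hg.label_ww_mem_Icc j)
    exact hg.exists_label_ww_dist_eq (mem_Icc.2 (by omega)) (hg.1.ne (by simp [z2, ww]))
      fun i ↦ hg.1.ne (by simp [vv, ww])

end IsAddGraceful

theorem IsAddGraceful.exists_image_label_ww_three {l : ℕ} {g : DSV l 2 3 → ℕ}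
    (hg : IsAddGraceful (doubleStarPos l 2 3) g) :
    ∃ x ∈ Icc 3 (l + 4), (univ.image fun j ↦ g (ww j)) = {x, l + 5, l + 6} := by
  have hinj : Function.Injective fun j ↦ g (ww j) := hg.1.comp ww_injective
  have hcard : #({l + 5, l + 6} : Finset ℕ) + 1 = #(univ.image fun j ↦ g (ww j)) := by
    rw [card_image_of_injective _ hinj, card_pair (by omega), card_fin]
  obtain ⟨x, hx, hxW⟩ := exists_eq_insert_iff.2 ⟨hg.pair_subset_image_label_ww, hcard⟩
  obtain ⟨j, -, rfl⟩ := mem_image.1 (hxW ▸ mem_insert_self x _)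
  have hj := mem_Icc.1 (hg.label_ww_mem_Icc j)
  simp only [mem_insert, mem_singleton, not_or] at hx
  exact ⟨g (ww j), mem_Icc.2 (by omega), hxW.symm⟩

theorem eq_and_two_mul_eq_of_exists_dist_eq {m z x : ℕ} (hm : m ≠ 5)
    (hz : z ∈ Icc 3 m) (hx : x ∈ Icc 3 m)
    (h : ∀ k ∈ ({1, 2, x} : Finset ℕ),
      ∃ w ∈ ({x, m + 1, m + 2} : Finset ℕ), Nat.dist z w = k) :
    z = m ∧ 2 * x = m := by
  rw [mem_Icc] at hz hx
  simp only [mem_insert, mem_singleton, forall_eq_or_imp, forall_eq, exists_eq_or_imp,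
    exists_eq_left, Nat.dist] at h
  obtain ⟨h1, h2, hx'⟩ := h
  have hzm : z = m := by
    by_contra hne
    have hzx : z - x + (x - z) = 1 := by omega
    have hz1 : z + 1 = m := by omega
    have hx3 : x = 3 := by omega
    omega
  omega

theorem doubleStar_twoNeg_r3_unique_general (l : ℕ) (hl : l ≠ 1)
    (g : DSV l 2 3 → ℕ) (hg : IsAddGraceful (doubleStarPos l 2 3) g) :
    Even l ∧ g z1 = 0 ∧ ({g (uu 0), g (uu 1)} : Finset ℕ) = {1, 2} ∧ g z2 = l + 4 ∧
      Finset.univ.image (fun i : Fin 3 => g (ww i)) = {l / 2 + 2, l + 5, l + 6} ∧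
      Finset.univ.image (fun i : Fin l => g (vv i)) =
        Finset.Icc 3 (l + 3) \ {l / 2 + 2} := by
  obtain ⟨x, hx, hW⟩ := hg.exists_image_label_ww_three
  have hdist : ∀ k ∈ ({1, 2, x} : Finset ℕ),
      ∃ w ∈ ({x, l + 4 + 1, l + 4 + 2} : Finset ℕ), Nat.dist (g z2) w = k := by
    intro k hk
    have hkm : k ≤ l + 3 + 1 := by
      rw [mem_Icc] at hx
      simp only [mem_insert, mem_singleton] at hk
      omega
    have hkW : k ∈ insert 1 (insert 2 (univ.image fun j ↦ g (ww j))) := by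
      rw [hW]
      simp only [mem_insert, mem_singleton] at hk ⊢
      tauto
    exact hW ▸ hg.exists_mem_image_label_ww_dist_eq hkm hkW
  obtain ⟨hz2, hxl⟩ := eq_and_two_mul_eq_of_exists_dist_eq (by omega)
    hg.label_z2_mem_Icc hx hdist
  obtain rfl : x = l / 2 + 2 := by omega
  refine ⟨Nat.even_iff.2 (by omega), hg.label_z1, hg.pair_label_uu, hz2, hW, ?_⟩
  rw [hg.image_label_vv, hW, hz2]
  ext k
  simp only [mem_sdiff, mem_Icc, mem_insert, mem_singleton]
  omega

/-- For `l ≥ 2` even, every additively graceful labeling `g`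
of the signed double star with positive central edge `z₁z₂`, `l` positive and
`2` negative pendant edges at `z₁`, and `3` positive pendant edges at `z₂`,
satisfies `g z₁ = 0`, `{g u₁, g u₂} = {1, 2}`, `g z₂ = l + 4`, the `w`'s receive
exactly the labels `{l/2 + 2, l + 5, l + 6}` and the `v`'s receive exactly the
remaining labels `{3, 4, …, l+3} \ {l/2 + 2}`; i.e. the labeling is unique up
to permutations among the `u`'s, the `v`'s and the `w`'s. -/
theorem doubleStar_twoNeg_r3_unique (l : ℕ) (hl : 2 ≤ l) (hle : Even l)
    (g : DSV l 2 3 → ℕ) (hg : IsAddGraceful (doubleStarPos l 2 3) g) :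
    g z1 = 0 ∧ ({g (uu 0), g (uu 1)} : Finset ℕ) = {1, 2} ∧ g z2 = l + 4 ∧
      Finset.univ.image (fun i : Fin 3 => g (ww i)) = {l / 2 + 2, l + 5, l + 6} ∧
      Finset.univ.image (fun i : Fin l => g (vv i)) =
        Finset.Icc 3 (l + 3) \ {l / 2 + 2} := by
  exact (doubleStar_twoNeg_r3_unique_general l (by omega) g hg).2
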